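/- Let 1 < p < 2 and u_p(x) := -sin_p(π_p x)^{p-1} cos_p(π_p x)^{2-p}. Then u_p is strictly decreasing on [0, m_p] and strictly increasing on [m_p, 1/2], where m_p ∈ (0, 1/2) is the unique point with cos_p(π_p m_p)^p = 2 - p. -/

import Mathlib

open Real Set

noncomputable def Fp (p y : ℝ) : ℝ := ∫ t in (0:ℝ)..y, (1 - t ^ p) ^ (-(1/p))

noncomputable def pip (p : ℝ) : ℝ := 2 * Fp p 1

/-!
Put `w = sin_p(x) ^ p`, which increases from `0` to `1` as `x` runs through `[0, π_p / 2]`. Since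
`cos_p(x) ^ p = 1 - w`, the product `sin_p(x) ^ a * cos_p(x) ^ b` equals
`w ^ (a / p) * (1 - w) ^ (b / p)`, which increases in `w` up to `w = a / (a + b)` and decreases
afterwards. For `a = p - 1` and `b = 2 - p` the turning point is `w = p - 1`, that is,
`cos_p(x) ^ p = 2 - p`.
-/

open Filter MeasureTheory Topology

theorem strictMonoOn_image_of_leftInvOn {α β : Type*} [LinearOrder α] [Preorder β] {f : α → β}
    {g : β → α} {t : Set α} (hf : StrictMonoOn f t) (hg : LeftInvOn g f t) :
    StrictMonoOn g (f '' t) := by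
  rintro _ ⟨x, hx, rfl⟩ _ ⟨y, hy, rfl⟩ hxy
  rwa [hg hx, hg hy, ← hf.lt_iff_lt hx hy]

theorem deriv_eq_zero_of_hasDerivWithinAt_zero {𝕜 E : Type*} [NontriviallyNormedField 𝕜]
    [NormedAddCommGroup E] [NormedSpace 𝕜 E] {f : 𝕜 → E} {t : Set 𝕜} {x : 𝕜}
    (ht : UniqueDiffWithinAt 𝕜 t x) (hf : HasDerivWithinAt f 0 t x) : deriv f x = 0 := by
  by_cases hdiff : DifferentiableAt 𝕜 f x
  · exact ht.eq_deriv _ hdiff.hasDerivAt.hasDerivWithinAt hf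
  · exact deriv_zero_of_not_differentiableAt hdiff

section BetaWeight

variable {a b w : ℝ}

/-- The unnormalised density `w ^ a * (1 - w) ^ b` of the beta distribution with parameters
`a + 1` and `b + 1`; products of powers of `sin_p` and `cos_p` are such densities in the
variable `sin_p ^ p`. -/
noncomputable def betaWeight (a b w : ℝ) : ℝ := w ^ a * (1 - w) ^ b

theorem continuous_betaWeight (ha : 0 ≤ a) (hb : 0 ≤ b) : Continuous (betaWeight a b) :=
  (continuous_id.rpow_const fun _ => Or.inr ha).mul
    ((continuous_const.sub continuous_id).rpow_const fun _ => Or.inr hb)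

theorem hasDerivAt_betaWeight (hw : w ∈ Ioo (0 : ℝ) 1) :
    HasDerivAt (betaWeight a b) (betaWeight (a - 1) (b - 1) w * (a - (a + b) * w)) w := by
  have hw0 : w ≠ 0 := hw.1.ne'
  have hw1 : 1 - w ≠ 0 := (sub_pos.2 hw.2).ne'
  have hleft := (hasDerivAt_id w).rpow_const (p := a) (Or.inl hw0)
  have hright := ((hasDerivAt_id w).const_sub 1).rpow_const (p := b) (Or.inl hw1)
  refine (hleft.mul hright).congr_deriv ?_
  simp only [betaWeight, id, rpow_sub_one hw0, rpow_sub_one hw1]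
  field_simp
  ring

theorem betaWeight_pos (hw : w ∈ Ioo (0 : ℝ) 1) : 0 < betaWeight a b w :=
  mul_pos (rpow_pos_of_pos hw.1 _) (rpow_pos_of_pos (sub_pos.2 hw.2) _)

theorem strictMonoOn_betaWeight (ha : 0 < a) (hb : 0 ≤ b) :
    StrictMonoOn (betaWeight a b) (Icc 0 (a / (a + b))) := by
  have hab : 0 < a + b := by positivity
  refine strictMonoOn_of_deriv_pos (convex_Icc _ _)
    (continuous_betaWeight ha.le hb).continuousOn fun w hw => ?_
  rw [interior_Icc] at hw
  have hwI : w ∈ Ioo (0 : ℝ) 1 :=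
    ⟨hw.1, hw.2.trans_le <| (div_le_one hab).2 <| le_add_of_nonneg_right hb⟩
  rw [(hasDerivAt_betaWeight hwI).deriv]
  exact mul_pos (betaWeight_pos hwI) (sub_pos.2 <| (lt_div_iff₀' hab).1 hw.2)

theorem strictAntiOn_betaWeight (ha : 0 ≤ a) (hb : 0 < b) :
    StrictAntiOn (betaWeight a b) (Icc (a / (a + b)) 1) := by
  have hab : 0 < a + b := by positivity
  refine strictAntiOn_of_deriv_neg (convex_Icc _ _)
    (continuous_betaWeight ha hb.le).continuousOn fun w hw => ?_
  rw [interior_Icc] at hw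
  have hwI : w ∈ Ioo (0 : ℝ) 1 := ⟨(div_nonneg ha hab.le).trans_lt hw.1, hw.2⟩
  rw [(hasDerivAt_betaWeight hwI).deriv]
  exact mul_neg_of_pos_of_neg (betaWeight_pos hwI) (sub_neg.2 <| (div_lt_iff₀' hab).1 hw.1)

end BetaWeight

section Fp

variable {p q t y : ℝ}

theorem one_sub_rpow_rpow_le (hp : 1 ≤ p) (hq : q ≤ 0) (ht : t ∈ Icc (0 : ℝ) 1) :
    (1 - t ^ p) ^ q ≤ (1 - t) ^ q := by
  rcases ht.2.eq_or_lt with rfl | ht1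
  · simp only [one_rpow, le_refl]
  · have htp : t ^ p ≤ t := rpow_le_self_of_le_one ht.1 ht.2 hp
    exact rpow_le_rpow_of_nonpos (sub_pos.2 ht1) (sub_le_sub_left htp 1) hq

theorem intervalIntegrable_one_sub_rpow_rpow (hp : 1 ≤ p) (hq : -1 < q) (hq0 : q ≤ 0) :
    IntervalIntegrable (fun t : ℝ => (1 - t ^ p) ^ q) volume 0 1 := by
  have hdom : IntervalIntegrable (fun t : ℝ => (1 - t) ^ q) volume 0 1 := by
    simpa using
      ((intervalIntegral.intervalIntegrable_rpow' (a := 0) (b := 1) hq).comp_sub_left 1).symm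
  refine hdom.mono_fun' (by fun_prop : Measurable _).aestronglyMeasurable ?_
  refine (ae_restrict_iff' measurableSet_uIoc).2 <| Eventually.of_forall fun t ht => ?_
  rw [uIoc_of_le zero_le_one] at ht
  have htp : t ^ p ≤ 1 := rpow_le_one ht.1.le ht.2 (zero_le_one.trans hp)
  exact (norm_of_nonneg (rpow_nonneg (sub_nonneg.2 htp) q)).trans_le
    (one_sub_rpow_rpow_le hp hq0 (Ioc_subset_Icc_self ht))

theorem Fp_zero : Fp p 0 = 0 :=
  intervalIntegral.integral_same

theorem Fp_one : Fp p 1 = pip p / 2 :=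
  (mul_div_cancel_left₀ _ two_ne_zero).symm

theorem continuousOn_Fp (hp : 1 < p) : ContinuousOn (Fp p) (Icc 0 1) := by
  have hp0 : 0 < p := zero_lt_one.trans hp
  have hint := intervalIntegrable_one_sub_rpow_rpow hp.le
    (neg_lt_neg ((div_lt_one hp0).2 hp)) (neg_nonpos.2 (one_div_pos.2 hp0).le)
  rw [← uIcc_of_le zero_le_one]
  exact intervalIntegral.continuousOn_primitive_interval' hint left_mem_uIcc

theorem hasDerivAt_Fp (hp : 0 < p) (hy : y ∈ Ioo (0 : ℝ) 1) :
    HasDerivAt (Fp p) ((1 - y ^ p) ^ (-(1 / p))) y := by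
  have hcont : ∀ t ∈ Icc 0 y, ContinuousAt (fun t : ℝ => (1 - t ^ p) ^ (-(1 / p))) t := by
    intro t ht
    have htp : t ^ p < 1 := rpow_lt_one ht.1 (ht.2.trans_lt hy.2) hp
    exact (continuousAt_const.sub (continuousAt_id.rpow_const (Or.inr hp.le))).rpow_const
      (Or.inl (sub_pos.2 htp).ne')
  refine intervalIntegral.integral_hasDerivAt_right ?_
    (by fun_prop : Measurable _).stronglyMeasurable.stronglyMeasurableAtFilter
    (hcont y (right_mem_Icc.2 hy.1.le))
  refine ContinuousOn.intervalIntegrable_of_Icc hy.1.le fun t ht => ?_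
  exact (hcont t ht).continuousWithinAt

theorem strictMonoOn_Fp (hp : 1 < p) : StrictMonoOn (Fp p) (Icc 0 1) := by
  have hp0 : 0 < p := zero_lt_one.trans hp
  refine strictMonoOn_of_deriv_pos (convex_Icc 0 1) (continuousOn_Fp hp) fun y hy => ?_
  rw [interior_Icc] at hy
  rw [(hasDerivAt_Fp hp0 hy).deriv]
  exact rpow_pos_of_pos (sub_pos.2 (rpow_lt_one hy.1.le hy.2 hp0)) _

theorem image_Fp_Icc (hp : 1 < p) : Fp p '' Icc 0 1 = Icc 0 (pip p / 2) := by
  rw [(continuousOn_Fp hp).image_Icc_of_monotoneOn zero_le_one (strictMonoOn_Fp hp).monotoneOn,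
    Fp_zero, Fp_one]

theorem pip_pos (hp : 1 < p) : 0 < pip p := by
  have h := strictMonoOn_Fp hp (left_mem_Icc.2 zero_le_one) (right_mem_Icc.2 zero_le_one) one_pos
  rw [Fp_zero, Fp_one] at h
  exact (div_pos_iff_of_pos_right two_pos).1 h

end Fp

/-- `s` agrees with the generalized sine `sin_p` on `[0, π_p / 2]`. For `1 < p`, `Fp p` maps
`[0, 1]` onto that interval, so it suffices to ask that `s` be a left inverse of it; elsewhere `s`
is arbitrary, so that `s` need not be differentiable at `0` and `π_p / 2`. -/
def IsSinp (p : ℝ) (s : ℝ → ℝ) : Prop := LeftInvOn s (Fp p) (Icc 0 1)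

namespace IsSinp

variable {p x : ℝ} {s : ℝ → ℝ}

theorem map_zero (hs : IsSinp p s) : s 0 = 0 := by
  simpa only [Fp_zero] using hs (left_mem_Icc.2 zero_le_one)

theorem map_pip_div_two (hs : IsSinp p s) : s (pip p / 2) = 1 := by
  simpa only [Fp_one] using hs (right_mem_Icc.2 zero_le_one)

theorem rightInvOn (hp : 1 < p) (hs : IsSinp p s) : RightInvOn s (Fp p) (Icc 0 (pip p / 2)) :=
  image_Fp_Icc hp ▸ LeftInvOn.rightInvOn_image hs

theorem image_Icc (hp : 1 < p) (hs : IsSinp p s) : s '' Icc 0 (pip p / 2) = Icc 0 1 :=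
  image_Fp_Icc hp ▸ LeftInvOn.image_image hs

theorem strictMonoOn (hp : 1 < p) (hs : IsSinp p s) : StrictMonoOn s (Icc 0 (pip p / 2)) :=
  image_Fp_Icc hp ▸ strictMonoOn_image_of_leftInvOn (strictMonoOn_Fp hp) hs

theorem map_mem_Icc (hp : 1 < p) (hs : IsSinp p s) (hx : x ∈ Icc 0 (pip p / 2)) :
    s x ∈ Icc (0 : ℝ) 1 :=
  hs.image_Icc hp ▸ mem_image_of_mem s hx

theorem map_mem_Ioo (hp : 1 < p) (hs : IsSinp p s) (hx : x ∈ Ioo 0 (pip p / 2)) :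
    s x ∈ Ioo (0 : ℝ) 1 := by
  have hpi : 0 ≤ pip p / 2 := (half_pos (pip_pos hp)).le
  have hxI := Ioo_subset_Icc_self hx
  rw [← hs.map_zero, ← hs.map_pip_div_two]
  exact ⟨hs.strictMonoOn hp (left_mem_Icc.2 hpi) hxI hx.1,
    hs.strictMonoOn hp hxI (right_mem_Icc.2 hpi) hx.2⟩

theorem continuousAt (hp : 1 < p) (hs : IsSinp p s) (hx : x ∈ Ioo 0 (pip p / 2)) :
    ContinuousAt s x := by
  refine (hs.strictMonoOn hp).continuousAt_of_image_mem_nhds (Icc_mem_nhds hx.1 hx.2) ?_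
  rw [hs.image_Icc hp]
  exact Icc_mem_nhds (hs.map_mem_Ioo hp hx).1 (hs.map_mem_Ioo hp hx).2

theorem continuousWithinAt_pip_div_two (hp : 1 < p) (hs : IsSinp p s) :
    ContinuousWithinAt s (Iic (pip p / 2)) (pip p / 2) := by
  refine (hs.strictMonoOn hp).continuousWithinAt_left_of_image_mem_nhdsWithin
    (Icc_mem_nhdsLE (half_pos (pip_pos hp))) ?_
  rw [hs.image_Icc hp, hs.map_pip_div_two]
  exact Icc_mem_nhdsLE one_pos

theorem hasDerivAt (hp : 1 < p) (hs : IsSinp p s) (hx : x ∈ Ioo 0 (pip p / 2)) :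
    HasDerivAt s ((1 - s x ^ p) ^ (1 / p)) x := by
  have hp0 : 0 < p := zero_lt_one.trans hp
  have hsx := hs.map_mem_Ioo hp hx
  have hpos : 0 < 1 - s x ^ p := sub_pos.2 (rpow_lt_one hsx.1.le hsx.2 hp0)
  have hright : ∀ᶠ z in 𝓝 x, Fp p (s z) = z :=
    mem_of_superset (Icc_mem_nhds hx.1 hx.2) (hs.rightInvOn hp)
  have hderiv := (hasDerivAt_Fp hp0 hsx).of_local_left_inverse (hs.continuousAt hp hx)
    (rpow_pos_of_pos hpos _).ne' hright
  rwa [rpow_neg hpos.le, inv_inv] at hderiv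

theorem hasDerivWithinAt_pip_div_two (hp : 1 < p) (hs : IsSinp p s) :
    HasDerivWithinAt s 0 (Iic (pip p / 2)) (pip p / 2) := by
  have hp0 : 0 < p := zero_lt_one.trans hp
  have hcont := hs.continuousWithinAt_pip_div_two hp
  have hnhds : Ioo 0 (pip p / 2) ∈ 𝓝[<] (pip p / 2) := Ioo_mem_nhdsLT (half_pos (pip_pos hp))
  have hlim : Tendsto (fun x => (1 - s x ^ p) ^ (1 / p)) (𝓝[<] (pip p / 2)) (𝓝 0) := by
    have hpow : ContinuousWithinAt (fun x => (1 - s x ^ p) ^ (1 / p)) (Iic (pip p / 2))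
        (pip p / 2) :=
      (continuousWithinAt_const.sub (hcont.rpow_const (Or.inr hp0.le))).rpow_const
        (Or.inr (one_div_pos.2 hp0).le)
    have hend : (1 - s (pip p / 2) ^ p) ^ (1 / p) = 0 := by
      rw [hs.map_pip_div_two, one_rpow, sub_self, zero_rpow (one_div_pos.2 hp0).ne']
    exact hend ▸ hpow.tendsto.mono_left (nhdsWithin_mono _ Iio_subset_Iic_self)
  refine hasDerivWithinAt_Iic_of_tendsto_deriv
    (fun x hx => (hs.hasDerivAt hp hx).differentiableAt.differentiableWithinAt)
    (hcont.mono (Ioo_subset_Iio_self.trans Iio_subset_Iic_self)) hnhds (hlim.congr' ?_)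
  filter_upwards [hnhds] with x hx using (hs.hasDerivAt hp hx).deriv.symm

theorem deriv_eq (hp : 1 < p) (hs : IsSinp p s) (hx : x ∈ Ioc 0 (pip p / 2)) :
    deriv s x = (1 - s x ^ p) ^ (1 / p) := by
  rcases hx.2.eq_or_lt with rfl | hlt
  · rw [deriv_eq_zero_of_hasDerivWithinAt_zero (uniqueDiffWithinAt_Iic _)
      (hs.hasDerivWithinAt_pip_div_two hp), hs.map_pip_div_two, one_rpow, sub_self, zero_rpow]
    exact (one_div_pos.2 (zero_lt_one.trans hp)).ne'
  · exact (hs.hasDerivAt hp ⟨hx.1, hlt⟩).deriv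

theorem rpow_mem_Icc (hp : 1 < p) (hs : IsSinp p s) (hx : x ∈ Icc 0 (pip p / 2)) :
    s x ^ p ∈ Icc (0 : ℝ) 1 :=
  have hsx := hs.map_mem_Icc hp hx
  ⟨rpow_nonneg hsx.1 p, rpow_le_one hsx.1 hsx.2 (zero_lt_one.trans hp).le⟩

theorem strictMonoOn_rpow (hp : 1 < p) (hs : IsSinp p s) :
    StrictMonoOn (fun x => s x ^ p) (Icc 0 (pip p / 2)) := fun _ hx _ hy hxy =>
  rpow_lt_rpow (hs.map_mem_Icc hp hx).1 (hs.strictMonoOn hp hx hy hxy) (zero_lt_one.trans hp)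

theorem rpow_add_deriv_rpow (hp : 1 < p) (hs : IsSinp p s) (hx : x ∈ Ioc 0 (pip p / 2)) :
    s x ^ p + deriv s x ^ p = 1 := by
  have hcos : 0 ≤ 1 - s x ^ p := sub_nonneg.2 (hs.rpow_mem_Icc hp (Ioc_subset_Icc_self hx)).2
  rw [hs.deriv_eq hp hx, ← rpow_mul hcos, one_div_mul_cancel (zero_lt_one.trans hp).ne',
    rpow_one, add_sub_cancel]

variable {a b c : ℝ}

theorem rpow_mul_deriv_rpow (hp : 1 < p) (hs : IsSinp p s) (ha : a ≠ 0)
    (hx : x ∈ Icc 0 (pip p / 2)) :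
    s x ^ a * deriv s x ^ b = betaWeight (a / p) (b / p) (s x ^ p) := by
  have hp0 : p ≠ 0 := (zero_lt_one.trans hp).ne'
  have hcos : 0 ≤ 1 - s x ^ p := sub_nonneg.2 (hs.rpow_mem_Icc hp hx).2
  have hsin : s x ^ a = (s x ^ p) ^ (a / p) := by
    rw [← rpow_mul (hs.map_mem_Icc hp hx).1, mul_div_cancel₀ _ hp0]
  rw [betaWeight, hsin]
  rcases hx.1.eq_or_lt with rfl | hpos
  -- `deriv s 0` may be a junk value, but its factor vanishes.
  · simp only [hs.map_zero, zero_rpow hp0, zero_rpow (div_ne_zero ha hp0), zero_mul]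
  · rw [hs.deriv_eq hp ⟨hpos, hx.2⟩, ← rpow_mul hcos, one_div_mul_eq_div]

theorem strictMonoOn_rpow_mul_deriv_rpow (hp : 1 < p) (hs : IsSinp p s) (ha : 0 < a) (hb : 0 ≤ b)
    (hc : c ∈ Icc 0 (pip p / 2)) (hsc : s c ^ p = a / (a + b)) :
    StrictMonoOn (fun x => s x ^ a * deriv s x ^ b) (Icc 0 c) := by
  have hp0 : 0 < p := zero_lt_one.trans hp
  have hsub : Icc 0 c ⊆ Icc 0 (pip p / 2) := Icc_subset_Icc_right hc.2
  have hpow := (hs.strictMonoOn_rpow hp).mono hsub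
  have hmaps : MapsTo (fun x => s x ^ p) (Icc 0 c) (Icc 0 (a / p / (a / p + b / p))) := by
    rw [← add_div, div_div_div_cancel_right₀ hp0.ne', ← hsc]
    exact fun x hx => ⟨(hs.rpow_mem_Icc hp (hsub hx)).1,
      hpow.monotoneOn hx (right_mem_Icc.2 hc.1) hx.2⟩
  refine ((strictMonoOn_betaWeight (div_pos ha hp0) (div_nonneg hb hp0.le)).comp hpow
    hmaps).congr fun x hx => ?_
  exact (hs.rpow_mul_deriv_rpow hp ha.ne' (hsub hx)).symm

theorem strictAntiOn_rpow_mul_deriv_rpow (hp : 1 < p) (hs : IsSinp p s) (ha : 0 < a) (hb : 0 < b)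
    (hc : c ∈ Icc 0 (pip p / 2)) (hsc : s c ^ p = a / (a + b)) :
    StrictAntiOn (fun x => s x ^ a * deriv s x ^ b) (Icc c (pip p / 2)) := by
  have hp0 : 0 < p := zero_lt_one.trans hp
  have hsub : Icc c (pip p / 2) ⊆ Icc 0 (pip p / 2) := Icc_subset_Icc_left hc.1
  have hpow := (hs.strictMonoOn_rpow hp).mono hsub
  have hmaps : MapsTo (fun x => s x ^ p) (Icc c (pip p / 2))
      (Icc (a / p / (a / p + b / p)) 1) := by
    rw [← add_div, div_div_div_cancel_right₀ hp0.ne', ← hsc]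
    exact fun x hx => ⟨hpow.monotoneOn (left_mem_Icc.2 hc.2) hx hx.1,
      (hs.rpow_mem_Icc hp (hsub hx)).2⟩
  refine ((strictAntiOn_betaWeight (div_pos ha hp0).le (div_pos hb hp0)).comp_strictMonoOn hpow
    hmaps).congr fun x hx => ?_
  exact (hs.rpow_mul_deriv_rpow hp ha.ne' (hsub hx)).symm

end IsSinp

theorem up_monotonicity_general {p a b m : ℝ} {s : ℝ → ℝ} (hp : 1 < p) (hs : IsSinp p s)
    (ha : 0 < a) (hb : 0 < b) (hm : m ∈ Ioc (0 : ℝ) (1 / 2))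
    (hmp : deriv s (pip p * m) ^ p = b / (a + b)) :
    StrictAntiOn (fun x => -(s (pip p * x) ^ a * deriv s (pip p * x) ^ b)) (Icc 0 m) ∧
      StrictMonoOn (fun x => -(s (pip p * x) ^ a * deriv s (pip p * x) ^ b)) (Icc m (1 / 2)) := by
  have hpi := pip_pos hp
  have hscale : StrictMono fun x => pip p * x := strictMono_mul_left_of_pos hpi
  have hhalf : pip p * (1 / 2) = pip p / 2 := mul_one_div _ _
  have hm0 : 0 < pip p * m := mul_pos hpi hm.1
  have hm1 : pip p * m ≤ pip p / 2 := hhalf ▸ hscale.monotone hm.2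
  have hturn : s (pip p * m) ^ p = a / (a + b) := by
    rw [eq_sub_of_add_eq (hs.rpow_add_deriv_rpow hp ⟨hm0, hm1⟩), hmp,
      one_sub_div (add_pos ha hb).ne', add_sub_cancel_right]
  constructor
  · refine ((hs.strictMonoOn_rpow_mul_deriv_rpow hp ha hb.le ⟨hm0.le, hm1⟩ hturn).comp
      (hscale.strictMonoOn _) ?_).neg
    simpa only [mul_zero] using (hscale.monotone.monotoneOn (Icc 0 m)).mapsTo_Icc
  · refine ((hs.strictAntiOn_rpow_mul_deriv_rpow hp ha hb ⟨hm0.le, hm1⟩ hturn).comp_strictMonoOn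
      (hscale.strictMonoOn _) ?_).neg
    simpa only [hhalf] using (hscale.monotone.monotoneOn (Icc m (1 / 2))).mapsTo_Icc

theorem up_monotonicity (p : ℝ) (hp1 : 1 < p) (hp2 : p < 2) (s : ℝ → ℝ)
    (hinv₁ : ∀ y ∈ Icc (0:ℝ) 1, s (Fp p y) = y)
    (hinv₂ : ∀ x ∈ Icc (0:ℝ) (pip p / 2), Fp p (s x) = x)
    (u : ℝ → ℝ)
    (hu : ∀ x, u x = -(s (pip p * x) ^ (p - 1) * deriv s (pip p * x) ^ (2 - p)))
    (m : ℝ) (hm : m ∈ Ioo (0:ℝ) (1/2))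
    (hmp : deriv s (pip p * m) ^ p = 2 - p) :
    StrictAntiOn u (Icc 0 m) ∧ StrictMonoOn u (Icc m (1/2)) := by
  rw [funext hu]
  exact up_monotonicity_general hp1 hinv₁ (sub_pos.2 hp1) (sub_pos.2 hp2)
    (Ioo_subset_Ioc_self hm) (by rw [hmp]; ring)
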